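/- arXiv:2309.00721 — 6 statements merged into one kernel-verified Lean document; each statement's English description precedes it below -/
import Mathlib

section
/- Let M be a 3×3 real symmetric matrix and a, b, m₀ real numbers with 0 < a, a‖u‖² ≤ uᵀMu ≤ b‖u‖² for all u ∈ ℝ³, and a ≤ m₀ ≤ b. Then for every q ∈ ℝ⁴ with ‖q‖ = 1, the matrix D(q) = J(q)MJᵀ(q) + m₀qqᵀ is symmetric and satisfies a‖v‖² ≤ vᵀD(q)v ≤ b‖v‖² for all v ∈ ℝ⁴. -/
/-!
For `‖q‖ = 1` the matrix `[q J(q)]` is orthogonal, so with `u = Jᵀ(q) v` one has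
`‖v‖² = ‖u‖² + (q ⬝ v)²` (`dotProduct_Jmat_transpose_mulVec`, which is Euler's four-square
identity), while `vᵀ D(q) v = uᵀ M u + m₀ (q ⬝ v)²` (`dotProduct_Dmat_mulVec`). Bounding the two
summands separately between `a` and `b` times `‖u‖²` and `(q ⬝ v)²` gives the claim.
-/

open Matrix

noncomputable section

/-- Cross-product (hat) matrix of a 3-vector: `vecHat v *ᵥ u = v ×₃ u`. -/
def vecHat (v : Fin 3 → ℝ) : Matrix (Fin 3) (Fin 3) ℝ :=
  !![0, -v 2, v 1; v 2, 0, -v 0; -v 1, v 0, 0]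

/-- The 4×3 matrix J(x): first row −x⃗ᵀ, lower 3×3 block x₀I₃ + x⃗^∧. -/
def Jmat (x : Fin 4 → ℝ) : Matrix (Fin 4) (Fin 3) ℝ :=
  Matrix.of fun i j =>
    if h : i = 0 then -x j.succ
    else (x 0 • (1 : Matrix (Fin 3) (Fin 3) ℝ) + vecHat fun k => x k.succ) (i.pred h) j

/-- The 4×3 matrix L(x): first row −x⃗ᵀ, lower 3×3 block x₀I₃ − x⃗^∧. -/
def Lmat (x : Fin 4 → ℝ) : Matrix (Fin 4) (Fin 3) ℝ :=
  Matrix.of fun i j =>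
    if h : i = 0 then -x j.succ
    else (x 0 • (1 : Matrix (Fin 3) (Fin 3) ℝ) - vecHat fun k => x k.succ) (i.pred h) j

/-- The 4×4 matrix Q(x) = [x J(x)] (first column x, remaining columns J(x)). -/
def Qmat (x : Fin 4 → ℝ) : Matrix (Fin 4) (Fin 4) ℝ :=
  Matrix.of fun i j => if h : j = 0 then x i else Jmat x i (j.pred h)

/-- The 4×4 matrix W(x) = [x L(x)] (first column x, remaining columns L(x)). -/
def Wmat (x : Fin 4 → ℝ) : Matrix (Fin 4) (Fin 4) ℝ :=
  Matrix.of fun i j => if h : j = 0 then x i else Lmat x i (j.pred h)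

/-- Euclidean norm on ℝ⁴: ‖x‖ = (xᵀx)^{1/2}. -/
def norm4 (x : Fin 4 → ℝ) : ℝ := Real.sqrt (x ⬝ᵥ x)

/-- The identity quaternion 1̄ = (1,0,0,0) ∈ ℝ⁴. -/
def one4 : Fin 4 → ℝ := ![1, 0, 0, 0]

/-- Inertia-type matrix D(q) = J(q) M Jᵀ(q) + m₀ q qᵀ. -/
def Dmat (M : Matrix (Fin 3) (Fin 3) ℝ) (m₀ : ℝ) (q : Fin 4 → ℝ) :
    Matrix (Fin 4) (Fin 4) ℝ :=
  Jmat q * M * (Jmat q)ᵀ + m₀ • vecMulVec q q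

theorem Jmat_eq (q : Fin 4 → ℝ) :
    Jmat q = !![-q 1, -q 2, -q 3; q 0, -q 3, q 2; q 3, q 0, -q 1; -q 2, q 1, q 0] := by
  have hblock : q 0 • (1 : Matrix (Fin 3) (Fin 3) ℝ) + vecHat (fun k => q k.succ) =
      !![q 0, -q 3, q 2; q 3, q 0, -q 1; -q 2, q 1, q 0] := by
    ext i j
    fin_cases i <;> fin_cases j <;> simp [vecHat]
  ext i j
  rw [Jmat, hblock]
  fin_cases i <;> fin_cases j <;> rfl

/-- Euler's four-square identity, read as `‖Jᵀ(q) v‖² + (q ⬝ v)² = ‖q‖² ‖v‖²`. -/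
theorem dotProduct_Jmat_transpose_mulVec (q v : Fin 4 → ℝ) :
    ((Jmat q)ᵀ *ᵥ v) ⬝ᵥ ((Jmat q)ᵀ *ᵥ v) + (q ⬝ᵥ v) ^ 2 = (q ⬝ᵥ q) * (v ⬝ᵥ v) := by
  simp only [Jmat_eq, mulVec, dotProduct, transpose_apply, Fin.sum_univ_three, Fin.sum_univ_four]
  simp
  ring

theorem dotProduct_Dmat_mulVec (M : Matrix (Fin 3) (Fin 3) ℝ) (m₀ : ℝ) (q v : Fin 4 → ℝ) :
    v ⬝ᵥ (Dmat M m₀ q *ᵥ v) =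
      ((Jmat q)ᵀ *ᵥ v) ⬝ᵥ (M *ᵥ ((Jmat q)ᵀ *ᵥ v)) + m₀ * (q ⬝ᵥ v) ^ 2 := by
  have h : v ⬝ᵥ (vecMulVec q q *ᵥ v) = (q ⬝ᵥ v) ^ 2 := by
    simp only [dotProduct, mulVec, vecMulVec_apply, Fin.sum_univ_four]
    ring
  rw [Dmat, add_mulVec, dotProduct_add, smul_mulVec, dotProduct_smul, h, smul_eq_mul,
    ← mulVec_mulVec, ← mulVec_mulVec, dotProduct_mulVec v (Jmat q), ← mulVec_transpose]

/-- D(q) is symmetric and a‖v‖² ≤ vᵀD(q)v ≤ b‖v‖² whenever M is symmetric,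
a‖u‖² ≤ uᵀMu ≤ b‖u‖² for all u, 0 < a, a ≤ m₀ ≤ b, and ‖q‖ = 1. -/
theorem stmt11 (M : Matrix (Fin 3) (Fin 3) ℝ) (hM : Mᵀ = M)
    (a b m₀ : ℝ) (ha : 0 < a)
    (hMa : ∀ u : Fin 3 → ℝ, a * (u ⬝ᵥ u) ≤ u ⬝ᵥ (M *ᵥ u))
    (hMb : ∀ u : Fin 3 → ℝ, u ⬝ᵥ (M *ᵥ u) ≤ b * (u ⬝ᵥ u))
    (ham₀ : a ≤ m₀) (hm₀b : m₀ ≤ b)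
    (q : Fin 4 → ℝ) (hq : norm4 q = 1) :
    (Dmat M m₀ q)ᵀ = Dmat M m₀ q ∧
    (∀ v : Fin 4 → ℝ,
      a * (v ⬝ᵥ v) ≤ v ⬝ᵥ (Dmat M m₀ q *ᵥ v) ∧
      v ⬝ᵥ (Dmat M m₀ q *ᵥ v) ≤ b * (v ⬝ᵥ v)) := by
  refine ⟨?_, fun v => ?_⟩
  · simp [Dmat, transpose_mul, hM, transpose_vecMulVec, Matrix.mul_assoc]
  · have hqq : q ⬝ᵥ q = 1 := by
      rwa [norm4, Real.sqrt_eq_one] at hq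
    have hv := dotProduct_Jmat_transpose_mulVec q v
    rw [hqq, one_mul] at hv
    rw [dotProduct_Dmat_mulVec, ← hv, mul_add, mul_add]
    exact ⟨add_le_add (hMa _) (mul_le_mul_of_nonneg_right ham₀ (sq_nonneg _)),
      add_le_add (hMb _) (mul_le_mul_of_nonneg_right hm₀b (sq_nonneg _))⟩
end
end

section
/- Let e = (1̄, 0) ∈ ℝ⁴ × ℝ⁴. For every g = (q, p) with q ∈ ℝ⁴, ‖q‖ = 1, and qᵀp = 0, one has g · e = g and e · g = g, where · is the binary operation on TS³ defined below. -/
/-!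
Since `Q(x) 1̄ = x` and `Q(1̄) = W(1̄) = I₄`, multiplying by `e = (1̄, 0)` on either side leaves
the base point unchanged. In the fibre component, the correction term of `1̄` is `1̄ - 1̄ = 0`,
while the correction term `λ (q₀ q - 1̄)` of `q` cancels against that of the product, leaving `p`.
-/

open Matrix

noncomputable section

/-- The binary operation on TS³ from Eq. (12) of the paper (with parameter λ). -/
def gmul (lam : ℝ) (g₁ g₂ : (Fin 4 → ℝ) × (Fin 4 → ℝ)) : (Fin 4 → ℝ) × (Fin 4 → ℝ) :=
  (Qmat g₁.1 *ᵥ g₂.1,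
    Qmat g₁.1 *ᵥ g₂.2 + Wmat g₂.1 *ᵥ g₁.2
      + lam • (Qmat g₁.1 *ᵥ (g₂.1 0 • g₂.1 - one4))
      + lam • (Wmat g₂.1 *ᵥ (g₁.1 0 • g₁.1 - one4))
      - lam • ((Qmat g₁.1 *ᵥ g₂.1) 0 • (Qmat g₁.1 *ᵥ g₂.1) - one4))

theorem Qmat_mulVec_one4 (x : Fin 4 → ℝ) : Qmat x *ᵥ one4 = x := by
  ext i
  simp [Qmat, one4, Matrix.mulVec, dotProduct, Fin.sum_univ_four]

theorem Qmat_one4 : Qmat one4 = 1 := by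
  ext i j
  fin_cases i <;> fin_cases j <;> simp [Qmat, Jmat, vecHat, one4, Fin.pred, Fin.subNat]

theorem Wmat_one4 : Wmat one4 = 1 := by
  ext i j
  fin_cases i <;> fin_cases j <;> simp [Wmat, Lmat, vecHat, one4, Fin.pred, Fin.subNat]

/-- The scalar `q₀` of `1̄` is `1`, so the correction term `q₀ q - 1̄` vanishes at `q = 1̄`. -/
theorem one4_correction : one4 0 • one4 - one4 = 0 := by
  simp [one4]

/-- e = (1̄, 0) is a two-sided identity for the binary operation on TS³. -/
theorem stmt13 (lam : ℝ) (hlam : 0 < lam) (q p : Fin 4 → ℝ)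
    (hq : norm4 q = 1) (hp : q ⬝ᵥ p = 0) :
    gmul lam (q, p) (one4, 0) = (q, p) ∧ gmul lam (one4, 0) (q, p) = (q, p) := by
  constructor
  · simp only [gmul, Qmat_mulVec_one4, Wmat_one4, one4_correction, Matrix.mulVec_zero,
      Matrix.one_mulVec, smul_zero, zero_add, add_zero, add_sub_cancel_right]
  · simp only [gmul, Qmat_one4, one4_correction, Matrix.mulVec_zero,
      Matrix.one_mulVec, smul_zero, add_zero, add_sub_cancel_right]
end
end

section
/- The binary operation · on TS³ is associative: for all g₁ = (q₁,p₁), g₂ = (q₂,p₂), g₃ = (q₃,p₃) with qᵢ ∈ ℝ⁴, ‖qᵢ‖ = 1 and qᵢᵀpᵢ = 0 for i = 1,2,3, one has (g₁ · g₂) · g₃ = g₁ · (g₂ · g₃). -/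
/-!
Identify ℝ⁴ with the quaternions, so that `Qmat a *ᵥ b = ab` and `Wmat b *ᵥ a = ab`. With the shift
`φ q = λ (q₀ q - 1̄)`, the second component `p₁₂` of the product satisfies
`p₁₂ + φ (q₁q₂) = q₁ (p₂ + φ q₂) + (p₁ + φ q₁) q₂`. Hence `(q, p) ↦ (q, p + φ q)` carries the
operation to the dual-quaternion product `(q₁q₂, q₁r₂ + r₁q₂)`, which is associative because left
and right quaternion multiplications are (anti)homomorphisms (`Qmat_mulVec`, `Wmat_mulVec`) and
commute with each other (`Wmat_Qmat_comm`).
-/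

open Matrix

noncomputable section

/-- Coordinates of the quaternion product `ab`, as a left multiplication by `a`. -/
lemma Qmat_mulVec_eq (a b : Fin 4 → ℝ) : Qmat a *ᵥ b =
    ![a 0 * b 0 - a 1 * b 1 - a 2 * b 2 - a 3 * b 3,
      a 0 * b 1 + a 1 * b 0 + a 2 * b 3 - a 3 * b 2,
      a 0 * b 2 - a 1 * b 3 + a 2 * b 0 + a 3 * b 1,
      a 0 * b 3 + a 1 * b 2 - a 2 * b 1 + a 3 * b 0] := by
  ext i
  fin_cases i <;>
    simp [mulVec, dotProduct, Fin.sum_univ_succ, Qmat, Jmat, vecHat, Fin.pred, Fin.subNat,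
      Matrix.one_apply] <;> ring

/-- `Wmat b` is right multiplication by `b`. -/
lemma Wmat_mulVec_eq (b a : Fin 4 → ℝ) : Wmat b *ᵥ a = Qmat a *ᵥ b := by
  rw [Qmat_mulVec_eq]
  ext i
  fin_cases i <;>
    simp [mulVec, dotProduct, Fin.sum_univ_succ, Wmat, Lmat, vecHat, Fin.pred, Fin.subNat,
      Matrix.one_apply] <;> ring

/-- Associativity of quaternion multiplication. -/
lemma Qmat_mulVec (a b c : Fin 4 → ℝ) :
    Qmat (Qmat a *ᵥ b) *ᵥ c = Qmat a *ᵥ (Qmat b *ᵥ c) := by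
  simp only [Qmat_mulVec_eq]
  ext i
  fin_cases i <;> simp <;> ring

lemma Wmat_mulVec (a b c : Fin 4 → ℝ) :
    Wmat (Qmat a *ᵥ b) *ᵥ c = Wmat b *ᵥ (Wmat a *ᵥ c) := by
  simp only [Wmat_mulVec_eq, Qmat_mulVec]

lemma Wmat_Qmat_comm (a b c : Fin 4 → ℝ) :
    Wmat b *ᵥ (Qmat a *ᵥ c) = Qmat a *ᵥ (Wmat b *ᵥ c) := by
  simp only [Wmat_mulVec_eq, Qmat_mulVec]

/-- The shift `φ q = λ (q₀ q - 1̄)` that turns `gmul` into the dual-quaternion product. -/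
def shift (lam : ℝ) (q : Fin 4 → ℝ) : Fin 4 → ℝ := lam • (q 0 • q - one4)

lemma gmul_eq_shift (lam : ℝ) (q₁ p₁ q₂ p₂ : Fin 4 → ℝ) :
    gmul lam (q₁, p₁) (q₂, p₂) = (Qmat q₁ *ᵥ q₂,
      Qmat q₁ *ᵥ (p₂ + shift lam q₂) + Wmat q₂ *ᵥ (p₁ + shift lam q₁)
        - shift lam (Qmat q₁ *ᵥ q₂)) := by
  simp only [gmul, shift, mulVec_add, mulVec_smul]
  congr 1
  abel

/-- The binary operation on TS³ is associative. -/
theorem stmt15 (lam : ℝ) (hlam : 0 < lam)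
    (q₁ p₁ q₂ p₂ q₃ p₃ : Fin 4 → ℝ)
    (hq₁ : norm4 q₁ = 1) (hp₁ : q₁ ⬝ᵥ p₁ = 0)
    (hq₂ : norm4 q₂ = 1) (hp₂ : q₂ ⬝ᵥ p₂ = 0)
    (hq₃ : norm4 q₃ = 1) (hp₃ : q₃ ⬝ᵥ p₃ = 0) :
    gmul lam (gmul lam (q₁, p₁) (q₂, p₂)) (q₃, p₃)
      = gmul lam (q₁, p₁) (gmul lam (q₂, p₂) (q₃, p₃)) := by
  simp only [gmul_eq_shift, sub_add_cancel, Qmat_mulVec, Wmat_mulVec, mulVec_add, Wmat_Qmat_comm,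
    add_assoc]
end
end

section
/- The set TS³ is closed under the binary operation ·: for all g₁ = (q₁,p₁) and g₂ = (q₂,p₂) with qᵢ ∈ ℝ⁴, ‖qᵢ‖ = 1 and qᵢᵀpᵢ = 0 for i = 1,2, the product g₁ · g₂ = (q₁₂, p₁₂) satisfies ‖q₁₂‖ = 1 and q₁₂ᵀp₁₂ = 0. -/
/-!
The matrices `Qmat x` and `Wmat x` represent left and right quaternion multiplication by `x`.
Hence each scales inner products by `x ⬝ᵥ x` (so is orthogonal for unit `x`), and
`Qmat x *ᵥ y = Wmat y *ᵥ x`. Moreover `q` is orthogonal to `q₀ q - 1̄` when `q` is a unit vector.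
Writing the product `q₁₂` as `Qmat q₁ *ᵥ q₂` or as `Wmat q₂ *ᵥ q₁`, as fits each summand of `p₁₂`,
all five inner products with `q₁₂` vanish separately.
-/

open Matrix

noncomputable section

lemma Qmat_eq (x : Fin 4 → ℝ) : Qmat x =
    !![x 0, -x 1, -x 2, -x 3;
       x 1, x 0, -x 3, x 2;
       x 2, x 3, x 0, -x 1;
       x 3, -x 2, x 1, x 0] := by
  ext i j
  fin_cases i <;> fin_cases j <;> simp [Qmat, Jmat, vecHat, Fin.pred, Matrix.one_apply]

lemma Wmat_eq (x : Fin 4 → ℝ) : Wmat x =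
    !![x 0, -x 1, -x 2, -x 3;
       x 1, x 0, x 3, -x 2;
       x 2, -x 3, x 0, x 1;
       x 3, x 2, -x 1, x 0] := by
  ext i j
  fin_cases i <;> fin_cases j <;> simp [Wmat, Lmat, vecHat, Fin.pred, Matrix.one_apply]

lemma Qmat_mulVec_dotProduct (x u v : Fin 4 → ℝ) :
    (Qmat x *ᵥ u) ⬝ᵥ (Qmat x *ᵥ v) = (x ⬝ᵥ x) * (u ⬝ᵥ v) := by
  simp [Qmat_eq, Matrix.mulVec, dotProduct, Fin.sum_univ_four]
  ring

lemma Wmat_mulVec_dotProduct (x u v : Fin 4 → ℝ) :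
    (Wmat x *ᵥ u) ⬝ᵥ (Wmat x *ᵥ v) = (x ⬝ᵥ x) * (u ⬝ᵥ v) := by
  simp [Wmat_eq, Matrix.mulVec, dotProduct, Fin.sum_univ_four]
  ring

/-- Both sides are the quaternion product `x y`. -/
lemma Qmat_mulVec_eq_Wmat_mulVec (x y : Fin 4 → ℝ) : Qmat x *ᵥ y = Wmat y *ᵥ x := by
  ext i
  fin_cases i <;>
    simp [Qmat_eq, Wmat_eq, Matrix.mulVec, dotProduct, Fin.sum_univ_four] <;> ring

lemma dotProduct_smul_self_sub_one4 {q : Fin 4 → ℝ} (hq : q ⬝ᵥ q = 1) :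
    q ⬝ᵥ (q 0 • q - one4) = 0 := by
  rw [dotProduct_sub, dotProduct_smul, hq]
  simp [one4, dotProduct, Fin.sum_univ_four]

/-- TS³ is closed under the binary operation: the product of two elements of TS³
again satisfies ‖q₁₂‖ = 1 and q₁₂ᵀp₁₂ = 0. -/
theorem stmt16 (lam : ℝ) (hlam : 0 < lam)
    (q₁ p₁ q₂ p₂ : Fin 4 → ℝ)
    (hq₁ : norm4 q₁ = 1) (hp₁ : q₁ ⬝ᵥ p₁ = 0)
    (hq₂ : norm4 q₂ = 1) (hp₂ : q₂ ⬝ᵥ p₂ = 0) :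
    norm4 (gmul lam (q₁, p₁) (q₂, p₂)).1 = 1 ∧
    (gmul lam (q₁, p₁) (q₂, p₂)).1 ⬝ᵥ (gmul lam (q₁, p₁) (q₂, p₂)).2 = 0 := by
  have h₁ : q₁ ⬝ᵥ q₁ = 1 := Real.sqrt_eq_one.mp hq₁
  have h₂ : q₂ ⬝ᵥ q₂ = 1 := Real.sqrt_eq_one.mp hq₂
  have h₁₂ : (Qmat q₁ *ᵥ q₂) ⬝ᵥ (Qmat q₁ *ᵥ q₂) = 1 := by
    rw [Qmat_mulVec_dotProduct, h₁, h₂, one_mul]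
  have hQ (v : Fin 4 → ℝ) (hv : q₂ ⬝ᵥ v = 0) : (Qmat q₁ *ᵥ q₂) ⬝ᵥ (Qmat q₁ *ᵥ v) = 0 := by
    rw [Qmat_mulVec_dotProduct, hv, mul_zero]
  have hW (v : Fin 4 → ℝ) (hv : q₁ ⬝ᵥ v = 0) : (Qmat q₁ *ᵥ q₂) ⬝ᵥ (Wmat q₂ *ᵥ v) = 0 := by
    rw [Qmat_mulVec_eq_Wmat_mulVec, Wmat_mulVec_dotProduct, hv, mul_zero]
  refine ⟨Real.sqrt_eq_one.mpr h₁₂, ?_⟩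
  simp only [gmul]
  rw [dotProduct_sub, dotProduct_add, dotProduct_add, dotProduct_add, dotProduct_smul,
    dotProduct_smul, dotProduct_smul, hQ _ hp₂, hW _ hp₁,
    hQ _ (dotProduct_smul_self_sub_one4 h₂), hW _ (dotProduct_smul_self_sub_one4 h₁),
    dotProduct_smul_self_sub_one4 h₁₂]
  simp
end
end

section
/- Define the sliding variable s(g) = p + λ(q₀q − 1̄) for g = (q,p) ∈ TS³, and let H = {g ∈ TS³ : s(g) = 0}. Then H is a subgroup of (TS³, ·): (i) the identity e = (1̄, 0) belongs to H; (ii) if g = (q,p) ∈ H then g⁻¹ = ((q₀, −q⃗), (p₀, −p⃗)) ∈ H; (iii) if g₁, g₂ ∈ H then g₁ · g₂ ∈ H. -/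
/-!
The sliding variable is additive with respect to the quaternion action of the base points:
`s(g₁ · g₂) = Q(q₁) s(g₂) + W(q₂) s(g₁)`, because the correction term `-λ(q₀,₁₂ Q(q₁)q₂ - 1̄)` of
the product cancels exactly the offset in `s` (`sVar_gmul`); likewise `s` commutes with conjugation.
So `s = 0` is preserved by products and inverses. The unit norm is preserved since the quaternion
norm is multiplicative (`Qmat_mulVec_dotProduct_self`). Tangency is then automatic: if `s(q, p) = 0`
and `‖q‖ = 1`, then `qᵀp = -λ(q₀ ‖q‖² - q₀) = 0` (`memH_iff`).
-/

open Matrix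

noncomputable section

/-- Quaternion-style conjugation on ℝ⁴: (x₀, x⃗) ↦ (x₀, −x⃗). -/
def qconj (x : Fin 4 → ℝ) : Fin 4 → ℝ := fun i => if i = 0 then x i else -x i

/-- The sliding variable s(g) = p + λ(q₀q − 1̄). -/
def sVar (lam : ℝ) (g : (Fin 4 → ℝ) × (Fin 4 → ℝ)) : Fin 4 → ℝ :=
  g.2 + lam • (g.1 0 • g.1 - one4)

/-- Membership in the sliding subgroup H = {g ∈ TS³ : s(g) = 0}. -/
def memH (lam : ℝ) (g : (Fin 4 → ℝ) × (Fin 4 → ℝ)) : Prop :=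
  norm4 g.1 = 1 ∧ g.1 ⬝ᵥ g.2 = 0 ∧ sVar lam g = 0

theorem norm4_eq_one_iff (x : Fin 4 → ℝ) : norm4 x = 1 ↔ x ⬝ᵥ x = 1 :=
  Real.sqrt_eq_one

/-- On the zero set of the sliding variable, tangency follows from the unit norm. -/
theorem memH_iff (lam : ℝ) (g : (Fin 4 → ℝ) × (Fin 4 → ℝ)) :
    memH lam g ↔ g.1 ⬝ᵥ g.1 = 1 ∧ sVar lam g = 0 := by
  rw [memH, norm4_eq_one_iff]
  refine ⟨fun h => ⟨h.1, h.2.2⟩, fun ⟨hq, hs⟩ => ⟨hq, ?_, hs⟩⟩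
  have hp : g.2 = -(lam • (g.1 0 • g.1 - one4)) := eq_neg_of_add_eq_zero_left hs
  have h1 : g.1 ⬝ᵥ one4 = g.1 0 := by
    simp [one4, dotProduct, Fin.sum_univ_four]
  rw [hp, dotProduct_neg, dotProduct_smul, dotProduct_sub, dotProduct_smul, hq, h1]
  simp

/-- Multiplicativity of the quaternion norm (Euler's four-square identity). -/
theorem Qmat_mulVec_dotProduct_self (x y : Fin 4 → ℝ) :
    (Qmat x *ᵥ y) ⬝ᵥ (Qmat x *ᵥ y) = (x ⬝ᵥ x) * (y ⬝ᵥ y) := by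
  have e1 : (1 : Fin 4).pred (by decide) = (0 : Fin 3) := rfl
  have e2 : (2 : Fin 4).pred (by decide) = (1 : Fin 3) := rfl
  have e3 : (3 : Fin 4).pred (by decide) = (2 : Fin 3) := rfl
  have s2 : (2 : Fin 3).succ = (3 : Fin 4) := rfl
  simp [dotProduct, mulVec, Fin.sum_univ_four, Qmat, Jmat, vecHat, e1, e2, e3, s2]
  ring

theorem sVar_gmul (lam : ℝ) (g₁ g₂ : (Fin 4 → ℝ) × (Fin 4 → ℝ)) :
    sVar lam (gmul lam g₁ g₂) = Qmat g₁.1 *ᵥ sVar lam g₂ + Wmat g₂.1 *ᵥ sVar lam g₁ := by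
  simp only [sVar, gmul, mulVec_add, mulVec_smul]
  abel

theorem qconj_dotProduct_self (x : Fin 4 → ℝ) : qconj x ⬝ᵥ qconj x = x ⬝ᵥ x := by
  simp [dotProduct, Fin.sum_univ_four, qconj]

theorem sVar_qconj (lam : ℝ) (q p : Fin 4 → ℝ) :
    sVar lam (qconj q, qconj p) = qconj (sVar lam (q, p)) := by
  ext i
  simp only [sVar, qconj, Pi.add_apply, Pi.smul_apply, Pi.sub_apply, smul_eq_mul, if_true]
  fin_cases i <;> simp [one4] <;> ring

/-- H is a subgroup of (TS³, ·): it contains the identity, is closed under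
inverses, and is closed under the group operation. -/
theorem stmt17 (lam : ℝ) (hlam : 0 < lam) :
    memH lam (one4, 0) ∧
    (∀ q p : Fin 4 → ℝ, memH lam (q, p) → memH lam (qconj q, qconj p)) ∧
    (∀ g₁ g₂ : (Fin 4 → ℝ) × (Fin 4 → ℝ),
      memH lam g₁ → memH lam g₂ → memH lam (gmul lam g₁ g₂)) := by
  simp only [memH_iff]
  refine ⟨⟨?_, ?_⟩, ?_, ?_⟩
  · simp [one4, dotProduct, Fin.sum_univ_four]
  · simp [sVar, one4]
  · rintro q p ⟨hq, hs⟩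
    refine ⟨(qconj_dotProduct_self q).trans hq, ?_⟩
    rw [sVar_qconj, hs]
    ext i
    simp [qconj]
  · rintro g₁ g₂ ⟨hq₁, hs₁⟩ ⟨hq₂, hs₂⟩
    refine ⟨?_, ?_⟩
    · change (Qmat g₁.1 *ᵥ g₂.1) ⬝ᵥ (Qmat g₁.1 *ᵥ g₂.1) = 1
      rw [Qmat_mulVec_dotProduct_self, hq₁, hq₂, one_mul]
    · rw [sVar_gmul, hs₁, hs₂, mulVec_zero, mulVec_zero, add_zero]
end
end

section
/- Let λ > 0 and let q : [0,∞) → ℝ⁴ be differentiable with ‖q(t)‖ = 1 for all t ≥ 0, satisfying the sliding-mode dynamics q̇(t) = −λ(q₀(t)q(t) − 1̄), where q₀(t) is the first component of q(t). If q₀(0) > −1, then q(t) → 1̄ as t → ∞. Moreover, the function V(t) = 1 − q₀(t) = ½‖q(t) − 1̄‖² satisfies V̇(t) = −λ(1 + q₀(t))V(t) for all t ≥ 0. -/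
/-!
On the unit sphere the scalar component satisfies `q₀' = λ (1 - q₀²)`, so `V = 1 - q₀` satisfies
`V' = -λ (1 + q₀) V` with `|q₀| ≤ 1`. Hence `V` is nonincreasing, `q₀(t) ≥ q₀(0)`, and the rate
`λ (1 + q₀)` stays above the positive constant `c = λ (1 + q₀(0))`. Therefore `exp (c t) V(t)` is
nonincreasing and `V` decays exponentially. Since `‖q - 1̄‖² = 2 V`, the whole state converges
to `1̄`.
-/

open Matrix

noncomputable section

lemma sq_sum_of_norm4_eq_one {x : Fin 4 → ℝ} (h : norm4 x = 1) :
    x 0 ^ 2 + x 1 ^ 2 + x 2 ^ 2 + x 3 ^ 2 = 1 := by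
  unfold norm4 at h
  rw [Real.sqrt_eq_one] at h
  simp only [dotProduct, Fin.sum_univ_four] at h
  linarith

lemma norm4_sub_one4_sq (x : Fin 4 → ℝ) :
    norm4 (x - one4) ^ 2 = (x 0 - 1) ^ 2 + x 1 ^ 2 + x 2 ^ 2 + x 3 ^ 2 := by
  have h : (x - one4) ⬝ᵥ (x - one4) = (x 0 - 1) ^ 2 + x 1 ^ 2 + x 2 ^ 2 + x 3 ^ 2 := by
    simp [dotProduct, Fin.sum_univ_four, one4]
    ring
  unfold norm4
  rw [h, Real.sq_sqrt (by positivity)]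

/-- Grönwall-type comparison for nonnegative solutions of `V' = -r V` with `r ≥ c`. The case `c = 0`
says that `V` itself is nonincreasing; the case `c > 0` gives exponential decay. -/
lemma exp_mul_antitoneOn {V r : ℝ → ℝ} {c : ℝ} (hV : ∀ t ≥ (0 : ℝ), 0 ≤ V t)
    (hd : ∀ t ≥ (0 : ℝ), HasDerivWithinAt V (-r t * V t) (Set.Ici 0) t)
    (hr : ∀ t ≥ (0 : ℝ), c ≤ r t) :
    AntitoneOn (fun t => Real.exp (c * t) * V t) (Set.Ici 0) := by
  have hE : ∀ t ≥ (0 : ℝ), HasDerivWithinAt (fun t => Real.exp (c * t) * V t)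
      (Real.exp (c * t) * ((c - r t) * V t)) (Set.Ici 0) t := by
    intro t ht
    have h1 : HasDerivAt (fun t : ℝ => Real.exp (c * t)) (Real.exp (c * t) * (c * 1)) t :=
      ((hasDerivAt_id t).const_mul c).exp
    exact (h1.hasDerivWithinAt.mul (hd t ht)).congr_deriv (by ring)
  refine antitoneOn_of_hasDerivWithinAt_nonpos (convex_Ici 0)
    (fun t ht => (hE t ht).continuousWithinAt)
    (fun t ht => (hE t (interior_subset ht)).mono interior_subset) ?_
  intro t ht
  have ht0 : (0 : ℝ) ≤ t := interior_subset ht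
  exact mul_nonpos_of_nonneg_of_nonpos (Real.exp_pos _).le
    (mul_nonpos_of_nonpos_of_nonneg (sub_nonpos.2 (hr t ht0)) (hV t ht0))

/-- Sliding property: under q̇ = −λ(q₀q − 1̄) on S³ with q₀(0) > −1, the state
q(t) converges to 1̄; moreover V = 1 − q₀ = ½‖q − 1̄‖² satisfies
V̇ = −λ(1 + q₀)V. -/
theorem stmt18 (lam : ℝ) (hlam : 0 < lam) (q : ℝ → Fin 4 → ℝ)
    (hnorm : ∀ t ≥ (0 : ℝ), norm4 (q t) = 1)
    (hderiv : ∀ t ≥ (0 : ℝ),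
      HasDerivWithinAt q (-lam • (q t 0 • q t - one4)) (Set.Ici 0) t)
    (hinit : q 0 0 > -1) :
    Filter.Tendsto q Filter.atTop (nhds one4) ∧
    (∀ t ≥ (0 : ℝ), 1 - q t 0 = (1 / 2) * norm4 (q t - one4) ^ 2) ∧
    (∀ t ≥ (0 : ℝ), HasDerivWithinAt (fun r => 1 - q r 0)
      (-(lam * (1 + q t 0)) * (1 - q t 0)) (Set.Ici 0) t) := by
  have hsq := fun t ht => sq_sum_of_norm4_eq_one (hnorm t ht)
  have hV : ∀ t ≥ (0 : ℝ), 1 - q t 0 = (1 / 2) * norm4 (q t - one4) ^ 2 := by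
    intro t ht
    rw [norm4_sub_one4_sq]
    linarith [hsq t ht]
  have hd : ∀ t ≥ (0 : ℝ), HasDerivWithinAt (fun r => 1 - q r 0)
      (-(lam * (1 + q t 0)) * (1 - q t 0)) (Set.Ici 0) t := by
    intro t ht
    have h0 := hasDerivWithinAt_pi.1 (hderiv t ht) 0
    refine (h0.const_sub 1).congr_deriv ?_
    simp [one4, vecHead]
    ring
  refine ⟨?_, hV, hd⟩
  have hV0 : ∀ t ≥ (0 : ℝ), 0 ≤ 1 - q t 0 := by
    intro t ht
    rw [hV t ht]
    positivity
  have hlow : ∀ t ≥ (0 : ℝ), -1 ≤ q t 0 := by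
    intro t ht
    nlinarith [hsq t ht, sq_nonneg (q t 1), sq_nonneg (q t 2), sq_nonneg (q t 3)]
  have hmono : ∀ t ≥ (0 : ℝ), q 0 0 ≤ q t 0 := by
    intro t ht
    have h := exp_mul_antitoneOn (c := 0) hV0 hd
      (fun s hs => mul_nonneg hlam.le (by linarith [hlow s hs]))
      (Set.mem_Ici.2 le_rfl) (Set.mem_Ici.2 ht) ht
    simp only [zero_mul, Real.exp_zero, one_mul] at h
    linarith
  have hc : 0 < lam * (1 + q 0 0) := mul_pos hlam (by linarith)
  have hbound : ∀ t ≥ (0 : ℝ),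
      1 - q t 0 ≤ Real.exp (-(lam * (1 + q 0 0) * t)) * (1 - q 0 0) := by
    intro t ht
    have h := exp_mul_antitoneOn (c := lam * (1 + q 0 0)) hV0 hd
      (fun s hs => mul_le_mul_of_nonneg_left (by linarith [hmono s hs]) hlam.le)
      (Set.mem_Ici.2 le_rfl) (Set.mem_Ici.2 ht) ht
    simp only [mul_zero, Real.exp_zero, one_mul] at h
    rw [Real.exp_neg, inv_mul_eq_div, le_div_iff₀ (Real.exp_pos _)]
    linarith
  have hlim : Filter.Tendsto (fun t : ℝ => Real.exp (-(lam * (1 + q 0 0) * t)) * (1 - q 0 0))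
      Filter.atTop (nhds 0) := by
    have h := (Real.tendsto_exp_neg_atTop_nhds_zero.comp
      (Filter.tendsto_id.const_mul_atTop hc)).mul_const (1 - q 0 0)
    simpa using h
  have hVlim : Filter.Tendsto (fun t => 1 - q t 0) Filter.atTop (nhds 0) := by
    refine tendsto_of_tendsto_of_tendsto_of_le_of_le' tendsto_const_nhds hlim ?_ ?_
    · filter_upwards [Filter.eventually_ge_atTop 0] with t ht using hV0 t ht
    · filter_upwards [Filter.eventually_ge_atTop 0] with t ht using hbound t ht
  -- Every coordinate of `q - 1̄` is at most `‖q - 1̄‖ = √(2 V)` in absolute value.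
  have hsqrt : Filter.Tendsto (fun t => Real.sqrt (2 * (1 - q t 0))) Filter.atTop (nhds 0) := by
    simpa using (hVlim.const_mul 2).sqrt
  rw [tendsto_pi_nhds]
  intro i
  rw [tendsto_iff_norm_sub_tendsto_zero]
  refine squeeze_zero' (Filter.Eventually.of_forall fun t => norm_nonneg _) ?_ hsqrt
  filter_upwards [Filter.eventually_ge_atTop 0] with t ht
  rw [Real.norm_eq_abs]
  apply Real.abs_le_sqrt
  have h := hV t ht
  rw [norm4_sub_one4_sq] at h
  fin_cases i <;> simp [one4] <;>
    nlinarith [sq_nonneg (q t 0 - 1), sq_nonneg (q t 1), sq_nonneg (q t 2), sq_nonneg (q t 3)]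
end
end
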